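/- Let 0 < α ≤ 1. There exists a constant C > 0 (depending only on α) such that for all λ > 0 and T > 0, ∫_0^T t^{α-1} |E_{α,α}(-λ t^α)| dt ≤ C T^α / α. -/

import Mathlib

open Real intervalIntegral

/-- The two-parameter Mittag-Leffler function (real arguments),
with the convention `1/Γ = 0` at the poles of `Γ` (as in Mathlib's `Real.Gamma`). -/
noncomputable def mittagLeffler (α β x : ℝ) : ℝ :=
  ∑' k : ℕ, x ^ k / Real.Gamma ((k : ℝ) * α + β)

open MeasureTheory Set Filter Topology

/-- Crude lower bound for the Gamma function. -/
lemma ml_Gamma_lower {A s : ℝ} (hA : 0 < A) (hs : 1 ≤ s) :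
    A ^ (s - 1) * Real.exp (-A) ≤ Real.Gamma s := by
  have hs0 : 0 < s := by linarith
  rw [Real.Gamma_eq_integral hs0]
  have hint := Real.GammaIntegral_convergent hs0
  have hsub : Ioi A ⊆ Ioi (0:ℝ) := Ioi_subset_Ioi hA.le
  calc A ^ (s - 1) * Real.exp (-A) = ∫ x in Ioi A, A ^ (s - 1) * Real.exp (-x) := by
        rw [MeasureTheory.integral_const_mul, integral_exp_neg_Ioi]
    _ ≤ ∫ x in Ioi A, Real.exp (-x) * x ^ (s - 1) := by
        apply setIntegral_mono_on
        · exact (integrableOn_exp_neg_Ioi A).const_mul _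
        · exact hint.mono_set hsub
        · exact measurableSet_Ioi
        · intro x hx
          rw [mul_comm]
          have : A ^ (s - 1) ≤ x ^ (s - 1) :=
            Real.rpow_le_rpow hA.le (le_of_lt hx) (by linarith)
          gcongr
    _ ≤ ∫ x in Ioi 0, Real.exp (-x) * x ^ (s - 1) := by
        apply setIntegral_mono_set hint
        · filter_upwards [ae_restrict_mem measurableSet_Ioi] with x hx
          have hx : 0 < x := hx
          simp only [Pi.zero_apply]
          positivity
        · exact hsub.eventuallyLE

lemma ml_Gpos {α : ℝ} (hα : 0 < α) (k : ℕ) : 0 < Real.Gamma ((k : ℝ) * α + α) :=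
  Real.Gamma_pos_of_pos (by positivity)

lemma ml_summable {α : ℝ} (hα : 0 < α) (R : ℝ) (hR : 0 ≤ R) :
    Summable (fun k : ℕ => R ^ k / Real.Gamma ((k : ℝ) * α + α)) := by
  set A : ℝ := (2 * R + 1) ^ (1 / α) with hAdef
  have hA : 0 < A := by positivity
  have hAα : A ^ α = 2 * R + 1 := by
    rw [hAdef, ← Real.rpow_mul (by positivity)]
    rw [one_div_mul_cancel hα.ne', Real.rpow_one]
  set c : ℝ := A ^ (α - 1) * Real.exp (-A) with hc
  have hcpos : 0 < c := by positivity
  have hgeo : Summable (fun k : ℕ => c⁻¹ * (1 / 2 : ℝ) ^ k) :=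
    (summable_geometric_of_lt_one (by norm_num) (by norm_num)).mul_left _
  refine hgeo.of_norm_bounded_eventually_nat ?_
  obtain ⟨N, hN⟩ := exists_nat_ge (1 / α)
  filter_upwards [eventually_ge_atTop N] with k hk
  have hk1 : 1 ≤ (k : ℝ) * α + α := by
    have : 1 / α ≤ (k : ℝ) := hN.trans (by exact_mod_cast hk)
    rw [div_le_iff₀ hα] at this
    linarith
  have hG := ml_Gamma_lower hA hk1
  have hpow : A ^ ((k : ℝ) * α + α - 1) * Real.exp (-A) = (2 * R + 1) ^ k * c := by
    rw [hc, show (k : ℝ) * α + α - 1 = α * k + (α - 1) by ring, Real.rpow_add hA,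
      Real.rpow_mul hA.le, hAα, Real.rpow_natCast]
    ring
  rw [hpow] at hG
  rw [Real.norm_of_nonneg (div_nonneg (pow_nonneg hR k) (ml_Gpos hα k).le)]
  have h2 : R ^ k ≤ (2 * R + 1) ^ k * (1 / 2) ^ k := by
    rw [← mul_pow]
    gcongr
    linarith
  rw [div_le_iff₀ (ml_Gpos hα k)]
  calc R ^ k ≤ (2 * R + 1) ^ k * (1 / 2) ^ k := h2
    _ = c⁻¹ * (1 / 2) ^ k * ((2 * R + 1) ^ k * c) := by field_simp
    _ ≤ _ := by gcongr

lemma ml_summable' {α : ℝ} (hα : 0 < α) (x : ℝ) :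
    Summable (fun k : ℕ => x ^ k / Real.Gamma ((k : ℝ) * α + α)) := by
  refine Summable.of_norm_bounded (ml_summable hα |x| (abs_nonneg x)) fun k => ?_
  rw [norm_div, norm_pow, Real.norm_eq_abs, Real.norm_of_nonneg (ml_Gpos hα k).le]

lemma ml_continuous {α : ℝ} (hα : 0 < α) : Continuous (mittagLeffler α α) := by
  rw [continuous_iff_continuousAt]
  intro x
  have h : ContinuousOn (mittagLeffler α α) (Metric.closedBall 0 (|x| + 1)) := by
    unfold mittagLeffler
    refine continuousOn_tsum (fun k => by fun_prop) (ml_summable hα (|x| + 1) (by positivity)) ?_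
    intro k y hy
    rw [norm_div, norm_pow, Real.norm_of_nonneg (ml_Gpos hα k).le]
    have := ml_Gpos hα k
    have hy' : ‖y‖ ≤ |x| + 1 := by simpa using hy
    gcongr
  refine h.continuousAt (Metric.closedBall_mem_nhds_of_mem ?_)
  simp

lemma ml_zero {α : ℝ} : mittagLeffler α α 0 = 1 / Real.Gamma α := by
  unfold mittagLeffler
  rw [tsum_eq_single 0]
  · simp
  · intro k hk
    simp [hk]

lemma ml_beta_cast {p q t x : ℝ} (hx : x ∈ Ioc 0 t) :
    (x : ℂ) ^ ((p : ℂ) - 1) * ((t : ℂ) - x) ^ ((q : ℂ) - 1)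
      = ((x ^ (p - 1) * (t - x) ^ (q - 1) : ℝ) : ℂ) := by
  rw [Complex.ofReal_mul, Complex.ofReal_cpow hx.1.le, Complex.ofReal_cpow (sub_nonneg.2 hx.2)]
  push_cast
  rfl

lemma ml_beta {p q t : ℝ} (hp : 0 < p) (hq : 0 < q) (ht : 0 < t) :
    ∫ x in Ioc 0 t, x ^ (p - 1) * (t - x) ^ (q - 1)
      = t ^ (p + q - 1) * (Real.Gamma p * Real.Gamma q / Real.Gamma (p + q)) := by
  have h := Complex.betaIntegral_scaled p q ht
  rw [intervalIntegral.integral_of_le ht.le,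
    setIntegral_congr_fun measurableSet_Ioc (fun x hx => ml_beta_cast hx), integral_complex_ofReal,
    Complex.betaIntegral_eq_Gamma_mul_div _ _ (by simpa) (by simpa)] at h
  rw [← Complex.ofReal_add, Complex.Gamma_ofReal, Complex.Gamma_ofReal, Complex.Gamma_ofReal,
    ← Complex.ofReal_one, ← Complex.ofReal_sub, ← Complex.ofReal_cpow ht.le] at h
  exact_mod_cast h

lemma ml_beta_integrable {p q t : ℝ} (hp : 0 < p) (hq : 0 < q) (ht : 0 < t) :
    IntegrableOn (fun x => x ^ (p - 1) * (t - x) ^ (q - 1)) (Ioc 0 t) := by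
  have hne : (∫ x in Ioc 0 t, x ^ (p - 1) * (t - x) ^ (q - 1)) ≠ 0 := by
    rw [ml_beta hp hq ht]
    have h1 := Real.Gamma_pos_of_pos hp
    have h2 := Real.Gamma_pos_of_pos hq
    have h3 := Real.Gamma_pos_of_pos (add_pos hp hq)
    positivity
  by_contra h
  exact hne (integral_undef h)

/-- The resolvent kernel. -/
noncomputable def mlf (α t : ℝ) : ℝ := t ^ (α - 1) * mittagLeffler α α (-t ^ α)

/-- The terms of the convolution. -/
noncomputable def mlF (α t : ℝ) (k : ℕ) (s : ℝ) : ℝ :=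
  ((-1) ^ k / Real.Gamma ((k : ℝ) * α + α)) *
    (s ^ (((k : ℝ) * α + α) - 1) * (t - s) ^ (α - 1))

lemma mlf_tsum {α s t : ℝ} (hs : 0 < s) :
    ∑' k, mlF α t k s = mlf α s * (t - s) ^ (α - 1) := by
  unfold mlf mittagLeffler
  rw [← tsum_mul_left, ← tsum_mul_right]
  refine tsum_congr fun k => ?_
  unfold mlF
  rw [show (k : ℝ) * α + α - 1 = α * k + (α - 1) by ring, Real.rpow_add hs,
      Real.rpow_mul hs.le, Real.rpow_natCast, neg_pow (s ^ α)]
  ring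

lemma ml_integral_norm {α t : ℝ} (hα : 0 < α) (ht : 0 < t) (k : ℕ) :
    ∫ s in Ioc 0 t, s ^ (((k : ℝ) * α + α) - 1) * (t - s) ^ (α - 1)
     = Real.Gamma ((k : ℝ) * α + α) * Real.Gamma α * t ^ (α - 1) *
      ((t ^ α) ^ (k + 1) / Real.Gamma (((k + 1 : ℕ) : ℝ) * α + α)) := by
  rw [ml_beta (by positivity) hα ht,
    show (k : ℝ) * α + α + α - 1 = α * ((k + 1 : ℕ) : ℝ) + (α - 1) by push_cast; ring,
    Real.rpow_add ht, Real.rpow_mul ht.le, Real.rpow_natCast,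
    show (k : ℝ) * α + α + α = ((k + 1 : ℕ) : ℝ) * α + α by push_cast; ring]
  ring

lemma ml_volterra {α t : ℝ} (hα : 0 < α) (ht : 0 < t) :
    IntegrableOn (fun s => mlf α s * (t - s) ^ (α - 1)) (Ioc 0 t) ∧
    Real.Gamma α * mlf α t + ∫ s in Ioc 0 t, mlf α s * (t - s) ^ (α - 1) = t ^ (α - 1) := by
  have hint : ∀ k, Integrable (mlF α t k) (volume.restrict (Ioc 0 t)) := fun k =>
    (ml_beta_integrable (p := (k : ℝ) * α + α) (by positivity) hα ht).const_mul _
  have hnorm : ∀ k, ∫ s in Ioc 0 t, ‖mlF α t k s‖ = Real.Gamma α * t ^ (α - 1) *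
      ((t ^ α) ^ (k + 1) / Real.Gamma (((k + 1 : ℕ) : ℝ) * α + α)) := by
    intro k
    have h1 : ∀ s ∈ Ioc 0 t, ‖mlF α t k s‖ = (Real.Gamma ((k : ℝ) * α + α))⁻¹ *
        (s ^ (((k : ℝ) * α + α) - 1) * (t - s) ^ (α - 1)) := by
      intro s hs
      have h2 : 0 ≤ s ^ (((k : ℝ) * α + α) - 1) * (t - s) ^ (α - 1) :=
        mul_nonneg (Real.rpow_nonneg hs.1.le _) (Real.rpow_nonneg (sub_nonneg.2 hs.2) _)
      unfold mlF
      rw [norm_mul, Real.norm_of_nonneg h2, norm_div, norm_pow,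
        Real.norm_of_nonneg (ml_Gpos hα k).le]
      simp
    rw [setIntegral_congr_fun measurableSet_Ioc h1, MeasureTheory.integral_const_mul, ml_integral_norm hα ht]
    have := (ml_Gpos hα k).ne'
    field_simp
  have hval : ∀ k, ∫ s in Ioc 0 t, mlF α t k s = -(Real.Gamma α * t ^ (α - 1) *
      ((-t ^ α) ^ (k + 1) / Real.Gamma (((k + 1 : ℕ) : ℝ) * α + α))) := by
    intro k
    unfold mlF
    rw [MeasureTheory.integral_const_mul, ml_integral_norm hα ht, neg_pow (t ^ α) (k + 1), pow_succ (-1 : ℝ)]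
    have := (ml_Gpos hα k).ne'
    field_simp
  have hsum : Summable fun k => ∫ s in Ioc 0 t, ‖mlF α t k s‖ := by
    simp_rw [hnorm]
    exact ((summable_nat_add_iff 1).2 (ml_summable hα (t ^ α) (by positivity))).mul_left _
  have hH := hasSum_integral_of_summable_integral_norm hint hsum
  have hcongr : ∀ s ∈ Ioc 0 t, ∑' k, mlF α t k s = mlf α s * (t - s) ^ (α - 1) :=
    fun s hs => mlf_tsum hs.1
  rw [setIntegral_congr_fun measurableSet_Ioc hcongr] at hH
  constructor
  · have hm : AEStronglyMeasurable (fun s => mlf α s * (t - s) ^ (α - 1))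
        (volume.restrict (Ioc 0 t)) := by
      have := (ml_continuous hα).measurable
      unfold mlf
      apply Measurable.aestronglyMeasurable
      fun_prop
    have hc : Continuous (fun s : ℝ => mittagLeffler α α (-s ^ α)) :=
      (ml_continuous hα).comp (Real.continuous_rpow_const hα.le).neg
    obtain ⟨M, hM⟩ := (isCompact_Icc (a := (0:ℝ)) (b := t)).exists_bound_of_continuousOn
      hc.continuousOn
    have hb := (ml_beta_integrable hα hα ht).const_mul M
    refine Integrable.mono' hb hm ?_
    filter_upwards [ae_restrict_mem measurableSet_Ioc] with s hs
    have h1 := hM s ⟨hs.1.le, hs.2⟩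
    have h2 : 0 ≤ s ^ (α - 1) := Real.rpow_nonneg hs.1.le _
    have h3 : 0 ≤ (t - s) ^ (α - 1) := Real.rpow_nonneg (sub_nonneg.2 hs.2) _
    unfold mlf
    rw [norm_mul, norm_mul, Real.norm_of_nonneg h2, Real.norm_of_nonneg h3]
    calc s ^ (α - 1) * ‖mittagLeffler α α (-s ^ α)‖ * (t - s) ^ (α - 1)
        ≤ s ^ (α - 1) * M * (t - s) ^ (α - 1) := by gcongr
      _ = _ := by ring
  · rw [← hH.tsum_eq]
    simp_rw [hval]
    rw [tsum_neg, tsum_mul_left]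
    have h0 := (ml_summable' hα (-t ^ α)).tsum_eq_zero_add
    unfold mlf mittagLeffler
    rw [h0]
    have := (Real.Gamma_pos_of_pos hα).ne'
    simp only [pow_zero, Nat.cast_zero, zero_mul, zero_add]
    field_simp
    ring

lemma ml_kernel_integral {α a b : ℝ} (hα : 0 < α) (hab : a ≤ b) :
    IntegrableOn (fun s => (b - s) ^ (α - 1)) (Ioc a b) ∧
    ∫ s in Ioc a b, (b - s) ^ (α - 1) = (b - a) ^ α / α := by
  constructor
  · rw [← intervalIntegrable_iff_integrableOn_Ioc_of_le hab]
    have h := (intervalIntegral.intervalIntegrable_rpow' (a := b - a) (b := 0)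
      (r := α - 1) (by linarith)).comp_sub_left b
    simpa using h
  · rw [← intervalIntegral.integral_of_le hab,
      intervalIntegral.integral_comp_sub_left (fun x => x ^ (α - 1)) b, sub_self,
      integral_rpow (Or.inl (by linarith))]
    rw [sub_add_cancel, Real.zero_rpow hα.ne', sub_zero]

lemma ml_ratio {α t t0 s : ℝ} (hα1 : α ≤ 1) (hs : 0 ≤ s) (hst : s < t) (ht0 : t < t0) :
    (t0 - s) ^ (α - 1) ≤ (t0 / t) ^ (α - 1) * (t - s) ^ (α - 1) := by
  have ht : 0 < t := by linarith
  have h1 : 0 < t - s := by linarith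
  have h0 : 0 < t0 := by linarith
  rw [← Real.mul_rpow (by positivity) h1.le]
  apply Real.rpow_le_rpow_of_nonpos (by positivity) _ (by linarith)
  rw [div_mul_eq_mul_div, div_le_iff₀ ht]
  nlinarith

lemma ml_pos {α : ℝ} (hα : 0 < α) (hα1 : α ≤ 1) (t : ℝ) (ht : 0 ≤ t) :
    0 < mittagLeffler α α (-t ^ α) := by
  by_contra! hneg
  have hG := Real.Gamma_pos_of_pos hα
  have hc : Continuous (fun s : ℝ => mittagLeffler α α (-s ^ α)) :=
    (ml_continuous hα).comp (Real.continuous_rpow_const hα.le).neg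
  set S : Set ℝ := {s | 0 ≤ s ∧ mittagLeffler α α (-s ^ α) ≤ 0} with hS
  have hSclosed : IsClosed S :=
    (isClosed_le continuous_const continuous_id).inter (isClosed_le hc continuous_const)
  have hSne : S.Nonempty := ⟨t, ht, hneg⟩
  have hSbdd : BddBelow S := ⟨0, fun s hs => hs.1⟩
  set t0 := sInf S with ht0def
  have ht0S : t0 ∈ S := hSclosed.csInf_mem hSne hSbdd
  have hbelow : ∀ s, 0 ≤ s → s < t0 → 0 < mittagLeffler α α (-s ^ α) := by
    intro s hs hst
    by_contra! h
    exact absurd (csInf_le hSbdd (show s ∈ S from ⟨hs, h⟩)) (not_le.2 hst)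
  have ht0 : 0 < t0 := by
    rcases ht0S.1.eq_or_lt with h | h
    · exfalso
      have h2 := ht0S.2
      rw [← h, Real.zero_rpow hα.ne', neg_zero, ml_zero] at h2
      have : 0 < 1 / Real.Gamma α := by positivity
      linarith
    · exact h
  have hfpos : ∀ s, 0 < s → s < t0 → 0 < mlf α s := fun s hs hst =>
    mul_pos (Real.rpow_pos_of_pos hs _) (hbelow s hs.le hst)
  have hft0 : mlf α t0 ≤ 0 :=
    mul_nonpos_of_nonneg_of_nonpos (Real.rpow_nonneg ht0.le _) ht0S.2
  -- choice of the step
  obtain ⟨δ, hδ0, hδt, hδ⟩ : ∃ δ : ℝ, 0 < δ ∧ δ < t0 / 2 ∧ δ ^ α / α < Real.Gamma α / 2 := by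
    have hT : Tendsto (fun δ : ℝ => δ ^ α / α) (𝓝[>] 0) (𝓝 0) := by
      have h1 : Continuous (fun δ : ℝ => δ ^ α / α) :=
        (Real.continuous_rpow_const hα.le).div_const _
      have h2 := h1.tendsto 0
      simp only [Real.zero_rpow hα.ne', zero_div] at h2
      exact h2.mono_left nhdsWithin_le_nhds
    have e1 := hT.eventually (gt_mem_nhds (show (0:ℝ) < Real.Gamma α / 2 by positivity))
    have e2 : ∀ᶠ δ : ℝ in 𝓝[>] 0, δ < t0 / 2 :=
      nhdsWithin_le_nhds (gt_mem_nhds (by positivity))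
    obtain ⟨δ, h1, h2, h3⟩ := (e1.and (e2.and self_mem_nhdsWithin)).exists
    exact ⟨δ, h3, h2, h1⟩
  -- the maximum point
  have hfc : ContinuousOn (mlf α) (Icc (t0 - δ) t0) := by
    unfold mlf
    refine ContinuousOn.mul ?_ hc.continuousOn
    refine continuousOn_id.rpow_const fun x hx => Or.inl ?_
    have := hx.1
    simp only [id]
    linarith
  obtain ⟨m, hmI, hmax⟩ := isCompact_Icc.exists_isMaxOn
    (nonempty_Icc.2 (by linarith : t0 - δ ≤ t0)) hfc
  have hmpos : 0 < m := by linarith [hmI.1]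
  have hfm : 0 < mlf α m := by
    have h1 : 0 < mlf α (t0 - δ) := hfpos _ (by linarith) (by linarith)
    exact h1.trans_le (hmax ⟨le_rfl, by linarith⟩)
  have hmt0 : m < t0 := by
    rcases hmI.2.eq_or_lt with h | h
    · rw [h] at hfm
      linarith
    · exact h
  obtain ⟨hi0, hv0⟩ := ml_volterra hα ht0
  obtain ⟨him, hvm⟩ := ml_volterra hα hmpos
  obtain ⟨hik, hvk⟩ := ml_kernel_integral hα hmt0.le
  have hsplit : ∫ s in Ioc 0 t0, mlf α s * (t0 - s) ^ (α - 1)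
      = (∫ s in Ioc 0 m, mlf α s * (t0 - s) ^ (α - 1))
        + ∫ s in Ioc m t0, mlf α s * (t0 - s) ^ (α - 1) := by
    rw [← Ioc_union_Ioc_eq_Ioc hmpos.le hmt0.le]
    apply setIntegral_union (Ioc_disjoint_Ioc_of_le le_rfl) measurableSet_Ioc
    · exact hi0.mono_set (Ioc_subset_Ioc_right hmt0.le)
    · exact hi0.mono_set (Ioc_subset_Ioc_left hmpos.le)
  set ρ : ℝ := (t0 / m) ^ (α - 1) with hρ
  have hρ2 : 1 / 2 ≤ ρ := by
    have h1 : t0 / m ≤ 2 := by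
      rw [div_le_iff₀ hmpos]
      linarith [hmI.1]
    have h2 : 1 ≤ t0 / m := by
      rw [le_div_iff₀ hmpos]
      linarith
    calc (1 / 2 : ℝ) ≤ 1 / (t0 / m) := by gcongr
      _ = (t0 / m) ^ (-1 : ℝ) := by rw [Real.rpow_neg_one, one_div]
      _ ≤ ρ := Real.rpow_le_rpow_of_exponent_le h2 (by linarith)
  have hρm : ρ * m ^ (α - 1) = t0 ^ (α - 1) := by
    rw [hρ, ← Real.mul_rpow (by positivity) hmpos.le, div_mul_cancel₀ _ hmpos.ne']
  have hA : ∫ s in Ioc 0 m, mlf α s * (t0 - s) ^ (α - 1)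
      ≤ ρ * ∫ s in Ioc 0 m, mlf α s * (m - s) ^ (α - 1) := by
    rw [← MeasureTheory.integral_const_mul, integral_Ioc_eq_integral_Ioo, integral_Ioc_eq_integral_Ioo]
    apply setIntegral_mono_on
    · exact hi0.mono_set (Ioo_subset_Ioc_self.trans (Ioc_subset_Ioc_right hmt0.le))
    · exact (him.mono_set Ioo_subset_Ioc_self).const_mul _
    · exact measurableSet_Ioo
    · intro s hs
      have h1 := ml_ratio hα1 hs.1.le hs.2 hmt0
      have h2 := hfpos s hs.1 (hs.2.trans hmt0)
      calc mlf α s * (t0 - s) ^ (α - 1) ≤ mlf α s * (ρ * (m - s) ^ (α - 1)) := by gcongr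
        _ = _ := by ring
  have hB : ∫ s in Ioc m t0, mlf α s * (t0 - s) ^ (α - 1) ≤ mlf α m * ((t0 - m) ^ α / α) := by
    rw [← hvk, ← MeasureTheory.integral_const_mul]
    apply setIntegral_mono_on
    · exact hi0.mono_set (Ioc_subset_Ioc_left hmpos.le)
    · exact hik.const_mul _
    · exact measurableSet_Ioc
    · intro s hs
      have h3 : 0 ≤ (t0 - s) ^ (α - 1) := Real.rpow_nonneg (sub_nonneg.2 hs.2) _
      have h4 : mlf α s ≤ mlf α m := hmax ⟨by linarith [hs.1, hmI.1], hs.2⟩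
      gcongr
  have hC : (t0 - m) ^ α / α < Real.Gamma α / 2 := by
    refine lt_of_le_of_lt ?_ hδ
    have : (t0 - m) ^ α ≤ δ ^ α :=
      Real.rpow_le_rpow (by linarith) (by linarith [hmI.1]) hα.le
    gcongr
  have hD : mlf α m * ((t0 - m) ^ α / α) < mlf α m * (Real.Gamma α / 2) := by gcongr
  have hE : ρ * ∫ s in Ioc 0 m, mlf α s * (m - s) ^ (α - 1)
      = t0 ^ (α - 1) - ρ * (Real.Gamma α * mlf α m) := by
    rw [← hρm, ← hvm]
    ring
  have hF : Real.Gamma α * mlf α t0 ≤ 0 := mul_nonpos_of_nonneg_of_nonpos hG.le hft0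
  have hH : 1 / 2 * (Real.Gamma α * mlf α m) ≤ ρ * (Real.Gamma α * mlf α m) := by gcongr
  linarith

lemma ml_le {α : ℝ} (hα : 0 < α) (hα1 : α ≤ 1) (t : ℝ) (ht : 0 < t) :
    mittagLeffler α α (-t ^ α) ≤ 1 / Real.Gamma α := by
  have hG := Real.Gamma_pos_of_pos hα
  obtain ⟨-, hv⟩ := ml_volterra hα ht
  have hnn : 0 ≤ ∫ s in Ioc 0 t, mlf α s * (t - s) ^ (α - 1) := by
    apply setIntegral_nonneg measurableSet_Ioc
    intro s hs
    exact mul_nonneg (mul_nonneg (Real.rpow_nonneg hs.1.le _) (ml_pos hα hα1 s hs.1.le).le)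
      (Real.rpow_nonneg (sub_nonneg.2 hs.2) _)
  have htp : 0 < t ^ (α - 1) := Real.rpow_pos_of_pos ht _
  have h1 : t ^ (α - 1) * (Real.Gamma α * mittagLeffler α α (-t ^ α)) ≤ t ^ (α - 1) * 1 := by
    unfold mlf at hv hnn
    linarith
  rw [le_div_iff₀ hG, mul_comm]
  exact le_of_mul_le_mul_left h1 htp

lemma ml_abs_le {α : ℝ} (hα : 0 < α) (hα1 : α ≤ 1) (x : ℝ) (hx : 0 < x) :
    |mittagLeffler α α (-x)| ≤ 1 / Real.Gamma α := by
  have ht : 0 < x ^ (1 / α) := by positivity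
  have hxt : (x ^ (1 / α)) ^ α = x := by
    rw [← Real.rpow_mul hx.le, one_div_mul_cancel hα.ne', Real.rpow_one]
  have h1 := ml_pos hα hα1 _ ht.le
  have h2 := ml_le hα hα1 _ ht
  rw [hxt] at h1 h2
  rwa [abs_of_pos h1]

theorem integral_abs_mittagLeffler_bound (α : ℝ) (hα0 : 0 < α) (hα1 : α ≤ 1) :
    ∃ C : ℝ, 0 < C ∧ ∀ lam T : ℝ, 0 < lam → 0 < T →
      (∫ t in (0:ℝ)..T, t ^ (α - 1) * |mittagLeffler α α (-lam * t ^ α)|)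
        ≤ C * T ^ α / α := by
  have hG := Real.Gamma_pos_of_pos hα0
  refine ⟨1 / Real.Gamma α, by positivity, fun lam T hlam hT => ?_⟩
  refine (le_abs_self _).trans ?_
  rw [← Real.norm_eq_abs]
  have hg : IntervalIntegrable (fun t : ℝ => 1 / Real.Gamma α * t ^ (α - 1)) volume 0 T :=
    (intervalIntegral.intervalIntegrable_rpow' (by linarith)).const_mul _
  refine (intervalIntegral.norm_integral_le_of_norm_le hT.le ?_ hg).trans ?_
  · refine Eventually.of_forall fun t ht => ?_
    have htα : 0 < t ^ α := Real.rpow_pos_of_pos ht.1 _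
    have h1 := ml_abs_le hα0 hα1 (lam * t ^ α) (by positivity)
    have h2 : 0 ≤ t ^ (α - 1) := Real.rpow_nonneg ht.1.le _
    rw [norm_mul, Real.norm_of_nonneg h2, Real.norm_eq_abs, abs_abs, neg_mul, mul_comm]
    gcongr
  · rw [intervalIntegral.integral_const_mul, integral_rpow (Or.inl (by linarith)),
      sub_add_cancel, Real.zero_rpow hα0.ne', sub_zero, mul_div_assoc]
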